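/- Let Ψ_1, Ψ_2 be the scaffold operators of Theorem 3.5. For all 0 ≤ i, j ≤ p−1 and all α ∈ K_2 with v_2(α) ≡ b_2 mod p^2, one has v_2(Ψ_1^i·Ψ_2^j·α) = v_2(α) + j·b_2 + i·p·b_1. -/

import Mathlib

/-- A normalized discrete valuation on a field `K`, recorded as a function
`v : K → ℤ`.  The value of `v` at `0` is irrelevant: all conditions below only
refer to nonzero elements (the convention `v 0 = ∞` being understood). -/
structure IsDiscVal {K : Type*} [Field K] (v : K → ℤ) : Prop where
  map_one : v 1 = 0
  map_mul : ∀ x y : K, x ≠ 0 → y ≠ 0 → v (x * y) = v x + v y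
  min_le_add : ∀ x y : K, x ≠ 0 → y ≠ 0 → x + y ≠ 0 → min (v x) (v y) ≤ v (x + y)
  exists_uniformizer : ∃ π : K, π ≠ 0 ∧ v π = 1

/-!
Put `Y = x₂ - μ x₁`, whose valuation is `-b₂` because the leading terms of `x₂` and `μ x₁` cancel.
Up to small errors `σ₂ = σ₁ ^ p` fixes `x₁` and sends `Y` to `Y + 1`, while `σ₁` sends `x₁` to
`x₁ + 1` and `Y` to `Y - μ`. Hence `Ψ₂ = σ₂ - 1` lowers the index `i` of `choose Y i * choose x₁ j`
by one. By Vandermonde's identity the truncated power `σ₂ ^ [μ]` acts on these products as the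
translation of `Y` by `μ`, which undoes the effect of `σ₁` on `Y`, so `Ψ₁` lowers the index `j` by
one.

The valuations `-(i b₂ + j p b₁)` of these products, for `i, j < p`, represent all residues modulo
`p ^ 2`, so the products form a basis in which an element and its dominant term have the same
valuation. The condition `v₂ α ≡ b₂` says that the dominant term of `α` is the one with
`i = j = p - 1`, from which each index can be lowered `p - 1` times.
-/

open Finset

/-- The valuation with values in `ℤ ∪ {∞}` of a discrete valuation given as a function to `ℤ`. -/
noncomputable def IsDiscVal.addValuation {K : Type*} [Field K] {v : K → ℤ} (hv : IsDiscVal v) :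
    AddValuation K (WithTop ℤ) :=
  letI := Classical.decEq K
  AddValuation.of (fun x ↦ if x = 0 then ⊤ else (v x : WithTop ℤ)) (if_pos rfl)
    (by simp [hv.map_one])
    (fun x y ↦ by
      rcases eq_or_ne x 0 with rfl | hx
      · simp
      rcases eq_or_ne y 0 with rfl | hy
      · simp
      rcases eq_or_ne (x + y) 0 with hxy | hxy
      · simp [hxy]
      · simpa [hx, hy, hxy] using hv.min_le_add x y hx hy hxy)
    (fun x y ↦ by
      rcases eq_or_ne x 0 with rfl | hx
      · simp
      rcases eq_or_ne y 0 with rfl | hy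
      · simp
      · simp [hx, hy, hv.map_mul x y hx hy])

lemma IsDiscVal.addValuation_apply {K : Type*} [Field K] {v : K → ℤ} (hv : IsDiscVal v) {x : K}
    (hx : x ≠ 0) : hv.addValuation x = v x :=
  if_neg hx

lemma IsDiscVal.addValuation_eq_coe_iff {K : Type*} [Field K] {v : K → ℤ} (hv : IsDiscVal v)
    {x : K} {n : ℤ} : hv.addValuation x = n ↔ x ≠ 0 ∧ v x = n := by
  rcases eq_or_ne x 0 with rfl | hx
  · simp
  · simp [hv.addValuation_apply hx, hx]

lemma IsDiscVal.addValuation_pos_iff {K : Type*} [Field K] {v : K → ℤ} (hv : IsDiscVal v) {x : K} :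
    0 < hv.addValuation x ↔ x = 0 ∨ 0 < v x := by
  rcases eq_or_ne x 0 with rfl | hx
  · simp
  · simp [hv.addValuation_apply hx, hx]

lemma IsDiscVal.addValuation_algebraMap {K L : Type*} [Field K] [Field L] [Algebra K L] {v : K → ℤ}
    {w : L → ℤ} (hv : IsDiscVal v) (hw : IsDiscVal w) {n : ℕ} (hn : n ≠ 0)
    (h : ∀ c : K, c ≠ 0 → w (algebraMap K L c) = n * v c) (c : K) :
    hw.addValuation (algebraMap K L c) = n • hv.addValuation c := by
  rcases eq_or_ne c 0 with rfl | hc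
  · obtain ⟨k, rfl⟩ := Nat.exists_eq_succ_of_ne_zero hn
    simp [succ_nsmul]
  · rw [hw.addValuation_apply (by simpa using hc), hv.addValuation_apply hc, h c hc,
      ← WithTop.coe_nsmul, nsmul_eq_mul]

namespace GaloisScaffold

section Valuation

variable {L : Type*} [Field L] {w : AddValuation L (WithTop ℤ)} {n k : ℤ} {x y : L}

lemma le_map_of_le (hx : n ≤ w x) (h : k ≤ n) : k ≤ w x :=
  (WithTop.coe_le_coe.2 h).trans hx

lemma exists_map_eq_coe (hx : x ≠ 0) : ∃ n : ℤ, w x = n :=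
  (WithTop.ne_top_iff_exists.1 (w.ne_top_iff.2 hx)).imp fun _ h ↦ h.symm

lemma map_pos_iff_one_le : 0 < w x ↔ (1 : ℤ) ≤ w x := by
  cases h : w x with
  | top => simp
  | coe n => norm_cast

lemma le_map_mul (hx : n ≤ w x) (hy : k ≤ w y) : (n + k : ℤ) ≤ w (x * y) := by
  rw [w.map_mul, WithTop.coe_add]
  exact add_le_add hx hy

lemma map_mul_eq (hx : w x = n) (hy : w y = k) : w (x * y) = (n + k : ℤ) := by
  rw [w.map_mul, hx, hy, WithTop.coe_add]

lemma map_pow_eq (hx : w x = n) (i : ℕ) : w (x ^ i) = (i * n : ℤ) := by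
  rw [w.map_pow, hx, ← WithTop.coe_nsmul, nsmul_eq_mul]

lemma exists_map_eq_of_map_eq_one (hx : w x = (1 : ℤ)) (n : ℤ) : ∃ y, w y = n := by
  have hx0 : x ≠ 0 := w.ne_top_iff.1 (hx ▸ WithTop.coe_ne_top)
  obtain ⟨k, hk⟩ := exists_map_eq_coe (w := w) (inv_ne_zero hx0)
  obtain rfl : k = -1 := by
    have h := map_mul_eq hx hk
    rw [mul_inv_cancel₀ hx0, w.map_one] at h
    norm_cast at h
    omega
  obtain ⟨i, rfl | rfl⟩ := n.eq_nat_or_neg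
  · exact ⟨x ^ i, by rw [map_pow_eq hx, mul_one]⟩
  · exact ⟨x⁻¹ ^ i, by rw [map_pow_eq hk, mul_neg_one]⟩

lemma le_map_pow (hx : n ≤ w x) (i : ℕ) : (i * n : ℤ) ≤ w (x ^ i) := by
  rw [w.map_pow, ← nsmul_eq_mul, WithTop.coe_nsmul]
  exact nsmul_le_nsmul_right hx i

lemma map_eq_of_map_pow_eq {i : ℕ} (hi : i ≠ 0) (h : w (x ^ i) = (i * n : ℤ)) : w x = n := by
  cases hx : w x with
  | top => simp [w.top_iff.1 hx, hi, -WithTop.coe_mul] at h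
  | coe k =>
    rw [map_pow_eq hx, WithTop.coe_inj] at h
    rw [mul_left_cancel₀ (by exact_mod_cast hi) h]

lemma zero_le_map_natCast (i : ℕ) : 0 ≤ w (i : L) := by
  induction i with
  | zero => simp
  | succ i ih => simpa using w.map_le_add ih w.map_one.ge

lemma zero_le_map_intCast (i : ℤ) : 0 ≤ w (i : L) := by
  obtain ⟨i, rfl | rfl⟩ := i.eq_nat_or_neg <;> simpa using zero_le_map_natCast i

variable {p : ℕ}

/-- Multiples of `p` have positive valuation, and by Bézout `j` is a unit modulo `p`. -/
lemma map_natCast_eq_zero (hp : p.Prime) (hwp : 0 < w (p : L)) {j : ℕ} (hj : 0 < j) (hjp : j < p) :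
    w (j : L) = 0 := by
  refine (zero_le_map_natCast j).antisymm' (not_lt.1 fun hwj ↦ ?_)
  have hbezout : (1 : L) = j * (j.gcdA p : ℤ) + p * (j.gcdB p : ℤ) := by
    have hcop : j.gcd p = 1 := (Nat.coprime_of_lt_prime hj.ne' hjp hp).symm
    exact_mod_cast congrArg (Int.cast : ℤ → L) (hcop ▸ Nat.gcd_eq_gcd_ab j p)
  have hpos : 0 < w (1 : L) := by
    rw [hbezout]
    refine w.map_lt_add ?_ ?_ <;> rw [w.map_mul]
    · exact add_pos_of_pos_of_nonneg hwj (zero_le_map_intCast _)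
    · exact add_pos_of_pos_of_nonneg hwp (zero_le_map_intCast _)
  simp at hpos

lemma map_natCast_mul (hp : p.Prime) (hwp : 0 < w (p : L)) {j : ℕ} (hj : 0 < j) (hjp : j < p)
    (x : L) : w (j * x) = w x := by
  rw [w.map_mul, map_natCast_eq_zero hp hwp hj hjp, zero_add]

lemma map_eq_of_map_pow_sub_self_eq (hp : 1 < p) (hn : n < 0)
    (h : w (x ^ p - x) = (p * n : ℤ)) : w x = n := by
  have hp0 : (1 : ℤ) < p := by exact_mod_cast hp
  have hlt : w (x ^ p) < w x := by
    by_contra! hle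
    have hx : w x ≤ w (x ^ p - x) := w.map_le_sub hle le_rfl
    cases hwx : w x with
    | top => simp [(w.top_iff).1 hwx, zero_pow (by omega : p ≠ 0), -WithTop.coe_mul] at h
    | coe l =>
      rw [h, hwx, WithTop.coe_le_coe] at hx
      rw [map_pow_eq hwx, hwx, WithTop.coe_le_coe] at hle
      nlinarith [mul_neg_of_pos_of_neg (zero_lt_one.trans hp0) hn]
  exact map_eq_of_map_pow_eq (i := p) (by omega) (by rw [← h, w.map_sub_eq_of_lt_left hlt])

lemma map_pow_sub_self_of_pos (hp : 1 < p) (hx : 0 < w x) : w (x ^ p - x) = w x := by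
  rcases eq_or_ne x 0 with rfl | hx0
  · simp [zero_pow (by omega : p ≠ 0)]
  refine w.map_sub_eq_of_lt_right ?_
  obtain ⟨n, hn⟩ := exists_map_eq_coe (w := w) hx0
  rw [map_pow_eq hn, hn, WithTop.coe_lt_coe]
  rw [hn] at hx
  have : 0 < n := by exact_mod_cast hx
  have : (1 : ℤ) < p := by exact_mod_cast hp
  nlinarith

end Valuation

section WittCarry

variable {L : Type*} [Field L]

/-- The carry `D(x, y)` in the addition of Witt vectors of length two:
`(x₀, x₁) + (y₀, y₁) = (x₀ + y₀, x₁ + y₁ + D(x₀, y₀))`. -/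
def wittCarry (p : ℕ) (x y : L) : L :=
  (x ^ p + y ^ p - (x + y) ^ p) / p

variable {p : ℕ}

lemma wittCarry_add_wittCarry (x y z : L) :
    wittCarry p x y + wittCarry p (x + y) z = wittCarry p x (y + z) + wittCarry p y z := by
  simp only [wittCarry]
  ring

variable [CharZero L] {x y : L}

lemma mul_wittCarry (hp : p ≠ 0) (x y : L) : p * wittCarry p x y = x ^ p + y ^ p - (x + y) ^ p :=
  mul_div_cancel₀ _ (by exact_mod_cast hp)

lemma wittCarry_eq_neg_sum (hp : p.Prime) (x y : L) :
    wittCarry p x y = -∑ k ∈ Ioo 0 p, x ^ k * y ^ (p - k) * ((p.choose k / p : ℕ) : L) := by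
  have hp0 : (p : L) ≠ 0 := by exact_mod_cast hp.ne_zero
  refine mul_left_cancel₀ hp0 ?_
  rw [mul_wittCarry hp.ne_zero, add_pow_prime_eq' hp]
  ring

variable {w : AddValuation L (WithTop ℤ)} {n k : ℤ}

lemma le_map_wittCarry (hp : p.Prime) (hx : n ≤ w x) (hy : n ≤ w y) :
    (p * n : ℤ) ≤ w (wittCarry p x y) := by
  rw [wittCarry_eq_neg_sum hp, w.map_neg]
  refine w.map_le_sum fun i hi ↦ ?_
  rw [mem_Ioo] at hi
  refine le_map_of_le (le_map_mul (le_map_mul (le_map_pow hx i) (le_map_pow hy (p - i)))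
    (zero_le_map_natCast _)) (le_of_eq ?_)
  push_cast [hi.2.le]
  ring

lemma le_map_wittCarry_of_nonneg (hp : p.Prime) (hn : n ≤ 0) (hx : n ≤ w x) (hk : 0 ≤ k)
    (hy : k ≤ w y) : ((p - 1) * n + k : ℤ) ≤ w (wittCarry p x y) := by
  rw [wittCarry_eq_neg_sum hp, w.map_neg]
  refine w.map_le_sum fun i hi ↦ ?_
  rw [mem_Ioo] at hi
  refine le_map_of_le (le_map_mul (le_map_mul (le_map_pow hx i) (le_map_pow hy (p - i)))
    (zero_le_map_natCast _)) ?_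
  have hpi : (1 : ℤ) ≤ (p - i : ℕ) := by omega
  nlinarith [(by omega : (i : ℤ) ≤ p - 1)]

lemma pow_sub_self_eq_mul_wittCarry (hp : p ≠ 0) (h : (x + y) ^ p - (x + y) = x ^ p - x) :
    y ^ p - y = p * wittCarry p x y := by
  rw [mul_wittCarry hp]
  linear_combination h

lemma le_map_pow_sub_self (hp : p.Prime) (hn : n ≤ 0) (hx : n ≤ w x) (hk : 0 ≤ k) (hy : k ≤ w y)
    {P : ℤ} (hwp : w (p : L) = P) (h : (x + y) ^ p - (x + y) = x ^ p - x) :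
    (P + (p - 1) * n + k : ℤ) ≤ w (y ^ p - y) := by
  rw [pow_sub_self_eq_mul_wittCarry hp.ne_zero h]
  exact le_map_of_le (le_map_mul hwp.ge (le_map_wittCarry_of_nonneg hp hn hx hk hy)) (by omega)

lemma eq_zero_of_artinSchreier_eq (hp : p.Prime) (hn : n ≤ 0) (hx : n ≤ w x) (hy : 0 < w y)
    {P : ℤ} (hwp : w (p : L) = P) (hP : 0 < P + (p - 1) * n)
    (h : (x + y) ^ p - (x + y) = x ^ p - x) : y = 0 := by
  by_contra hy0
  obtain ⟨k, hk⟩ := exists_map_eq_coe (w := w) hy0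
  have hk0 : 0 < k := by rw [hk] at hy; exact_mod_cast hy
  have hle := le_map_pow_sub_self hp hn hx hk0.le hk.ge hwp h
  rw [map_pow_sub_self_of_pos hp.one_lt hy, hk, WithTop.coe_le_coe] at hle
  omega

lemma le_map_of_artinSchreier_eq (hp : p.Prime) (hn : n ≤ 0) (hx : n ≤ w x) (hy : 0 < w y)
    {P : ℤ} (hwp : w (p : L) = P) (hP : 0 < P)
    (h : (x + (1 + y)) ^ p - (x + (1 + y)) = x ^ p - x) : (P + (p - 1) * n : ℤ) ≤ w y := by
  have hy1 : (0 : ℤ) ≤ w (1 + y) := w.map_le_add w.map_one.ge hy.le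
  rcases eq_or_ne y 0 with rfl | hy0
  · simp
  obtain ⟨k, hk⟩ := exists_map_eq_coe (w := w) hy0
  have hk0 : 0 ≤ k := by rw [hk] at hy; exact_mod_cast hy.le
  have hcarry : (P + k : ℤ) ≤ w (p * wittCarry p 1 y) :=
    le_map_mul hwp.ge (le_map_of_le
      (le_map_wittCarry_of_nonneg hp le_rfl w.map_one.ge hk0 hk.ge) (by omega))
  have hlt : w (y ^ p - y) < w (p * wittCarry p 1 y) := by
    rw [map_pow_sub_self_of_pos hp.one_lt hy, hk]
    exact (WithTop.coe_lt_coe.2 (by omega)).trans_le hcarry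
  have hsplit : (1 + y) ^ p - (1 + y) = y ^ p - y - p * wittCarry p 1 y := by
    rw [mul_wittCarry hp.ne_zero]
    ring
  rw [← map_pow_sub_self_of_pos hp.one_lt hy, ← w.map_sub_eq_of_lt_left hlt, ← hsplit]
  simpa using le_map_pow_sub_self hp hn hx le_rfl hy1 hwp h

end WittCarry

section Binomial

variable {L : Type*} [Field L] [CharZero L]

lemma choose_eq_prod_div (x : L) (i : ℕ) :
    Ring.choose x i = (∏ k ∈ range i, (x - k)) / (i.factorial : L) := by
  rw [Ring.choose_eq_smul, ← Polynomial.aeval_eq_smeval, Polynomial.aeval_def,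
    ← Polynomial.eval_map, algebraMap_int_eq, descPochhammer_map,
    descPochhammer_eval_eq_prod_range, smul_eq_mul, inv_mul_eq_div]

lemma succ_mul_choose_succ (x : L) (i : ℕ) :
    ((i + 1 : ℕ) : L) * Ring.choose x (i + 1) = Ring.choose x i * (x - i) := by
  have h1 : ((i + 1 : ℕ) : L) ≠ 0 := by exact_mod_cast i.succ_ne_zero
  have h2 : (i.factorial : L) ≠ 0 := by exact_mod_cast i.factorial_ne_zero
  rw [choose_eq_prod_div, choose_eq_prod_div, prod_range_succ, Nat.factorial_succ, Nat.cast_mul]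
  field_simp

variable {w : AddValuation L (WithTop ℤ)} {p : ℕ} {n d : ℤ} {x y : L} {i : ℕ}

lemma le_map_choose (hp : p.Prime) (hwp : 0 < w (p : L)) (hn : n ≤ 0) (hx : n ≤ w x)
    (hi : i < p) : (i * n : ℤ) ≤ w (Ring.choose x i) := by
  induction i with
  | zero => simp
  | succ i ih =>
    rw [← map_natCast_mul hp hwp i.succ_pos hi, succ_mul_choose_succ]
    have hxi : n ≤ w (x - i) :=
      w.map_le_sub hx (le_map_of_le (zero_le_map_natCast i) hn)
    exact le_map_of_le (le_map_mul (ih (by omega)) hxi) (by push_cast; linarith)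

lemma map_choose_eq (hp : p.Prime) (hwp : 0 < w (p : L)) (hn : n < 0) (hx : w x = n)
    (hi : i < p) : w (Ring.choose x i) = (i * n : ℤ) := by
  induction i with
  | zero => simp
  | succ i ih =>
    have hxi : w (x - i) = n := by
      rw [← hx]
      refine w.map_sub_eq_of_lt_left ?_
      rw [hx]
      exact (WithTop.coe_lt_coe.2 hn).trans_le (zero_le_map_natCast i)
    rw [← map_natCast_mul hp hwp i.succ_pos hi, succ_mul_choose_succ,
      map_mul_eq (ih (by omega)) hxi, Nat.cast_succ, add_one_mul]

lemma le_map_choose_sub_choose (hp : p.Prime) (hwp : 0 < w (p : L)) (hn : n ≤ 0) (hx : n ≤ w x)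
    (hy : n ≤ w y) (hxy : d ≤ w (x - y)) (hi : i < p) :
    (d + (i - 1) * n : ℤ) ≤ w (Ring.choose x i - Ring.choose y i) := by
  induction i with
  | zero => simp
  | succ i ih =>
    have hrec : ((i + 1 : ℕ) : L) * (Ring.choose x (i + 1) - Ring.choose y (i + 1)) =
        (Ring.choose x i - Ring.choose y i) * (x - i) + Ring.choose y i * (x - y) := by
      linear_combination succ_mul_choose_succ x i - succ_mul_choose_succ y i
    have hxi : n ≤ w (x - i) :=
      w.map_le_sub hx (le_map_of_le (zero_le_map_natCast i) hn)
    rw [← map_natCast_mul hp hwp i.succ_pos hi, hrec]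
    refine w.map_le_add (le_map_of_le (le_map_mul (ih (by omega)) hxi) ?_)
      (le_map_of_le (le_map_mul (le_map_choose hp hwp hn hy (by omega)) hxy) ?_) <;>
    · push_cast
      linarith

lemma le_map_choose_succ_sub (hp : p.Prime) (hwp : 0 < w (p : L)) (hn : n ≤ 0) (hd : 0 ≤ d)
    (hx : n ≤ w x) (hxy : d ≤ w (y - x - 1)) (hi : i + 1 < p) :
    (d + i * n : ℤ) ≤
      w (Ring.choose y (i + 1) - Ring.choose x (i + 1) - Ring.choose x i) := by
  have hx1 : n ≤ w (x + 1) := w.map_le_add hx (le_map_of_le w.map_one.ge hn)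
  have hxy' : d ≤ w (y - (x + 1)) := by rwa [← sub_sub]
  have hy : n ≤ w y := by
    simpa using w.map_le_add hx1 (le_map_of_le hxy' (hn.trans hd))
  have h := le_map_choose_sub_choose hp hwp hn hy hx1 hxy' hi
  rw [Ring.choose_succ_succ] at h
  convert h using 2
  · push_cast
    ring
  · ring

end Binomial

section IncongruentBasis

variable {K L : Type*} [Field K] [Field L] [Algebra K L]
  {Γ : Type*} [LinearOrderedAddCommGroupWithTop Γ] {w : AddValuation L Γ} {ι : Type*} [Fintype ι]

lemma map_sum_eq_of_forall_lt {f : ι → L} {i : ι} (hdom : ∀ j ≠ i, w (f i) < w (f j)) :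
    w (∑ j, f j) = w (f i) := by
  classical
  exact Valuation.map_sum_eq_of_lt w (mem_univ i) fun j hj ↦ hdom j (by simpa using hj)

lemma map_smul_add_le {T : L →ₗ[K] L} {d : Γ} {x : L} (hT : w x + d ≤ w (T x)) (c : K) :
    w (c • x) + d ≤ w (T (c • x)) := by
  rw [T.map_smul, Algebra.smul_def, Algebra.smul_def, w.map_mul, w.map_mul, add_assoc]
  gcongr

/-- A family of `[L : K]` nonzero elements of `L` whose valuations are distinct modulo the values of
`K`. It is a basis of `L` over `K` in which the terms of an expansion have distinct valuations. -/
structure IsIncongruentBasis (K : Type*) {L : Type*} [Field K] [Field L] [Algebra K L]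
    {Γ : Type*} [LinearOrderedAddCommMonoidWithTop Γ] (w : AddValuation L Γ)
    {ι : Type*} [Fintype ι] (b : ι → L) : Prop where
  ne_zero : ∀ i, b i ≠ 0
  eq_of_map_eq_map_smul : ∀ i j (c : K), w (b i) = w (c • b j) → i = j
  card_eq_finrank : Fintype.card ι = Module.finrank K L

namespace IsIncongruentBasis

variable {b : ι → L} {c : ι → K}

lemma eq_of_map_smul_eq_map_smul (hb : IsIncongruentBasis K w b) {i j : ι} {x y : K} (hx : x ≠ 0)
    (h : w (x • b i) = w (y • b j)) : i = j := by
  refine hb.eq_of_map_eq_map_smul i j (x⁻¹ * y) ?_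
  rw [mul_smul, Algebra.smul_def x⁻¹, w.map_mul, ← h, ← w.map_mul, ← Algebra.smul_def,
    inv_smul_smul₀ hx]

lemma exists_dominant (hb : IsIncongruentBasis K w b) (hc : c ≠ 0) :
    ∃ i, c i ≠ 0 ∧ ∀ j ≠ i, w (c i • b i) < w (c j • b j) := by
  obtain ⟨k, hk⟩ := Function.ne_iff.1 hc
  obtain ⟨i, -, hmin⟩ := exists_min_image univ (fun i ↦ w (c i • b i)) ⟨k, mem_univ k⟩
  have hi : c i ≠ 0 := by
    intro hi
    have htop : w (c k • b k) = ⊤ := by simpa [hi] using hmin k (mem_univ k)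
    exact smul_ne_zero hk (hb.ne_zero k) (w.top_iff.1 htop)
  exact ⟨i, hi, fun j hj ↦ (hmin j (mem_univ j)).lt_of_ne
    fun h ↦ hj (hb.eq_of_map_smul_eq_map_smul hi h).symm⟩

lemma linearIndependent (hb : IsIncongruentBasis K w b) : LinearIndependent K b := by
  rw [Fintype.linearIndependent_iff]
  intro c hc
  by_contra! hne
  obtain ⟨i, hi, hdom⟩ := hb.exists_dominant (c := c) (Function.ne_iff.2 hne)
  have hval := map_sum_eq_of_forall_lt (f := fun i ↦ c i • b i) hdom
  rw [hc, w.map_zero] at hval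
  exact smul_ne_zero hi (hb.ne_zero i) (w.top_iff.1 hval.symm)

lemma exists_eq_sum [FiniteDimensional K L] (hb : IsIncongruentBasis K w b) (x : L) :
    ∃ c : ι → K, ∑ i, c i • b i = x := by
  have hspan := hb.linearIndependent.span_eq_top_of_card_eq_finrank' hb.card_eq_finrank
  exact Submodule.mem_span_range_iff_exists_fun K |>.1 (hspan ▸ Submodule.mem_top)

lemma exists_eq_sum_dominant [FiniteDimensional K L] (hb : IsIncongruentBasis K w b) {x : L}
    (hx : x ≠ 0) :
    ∃ (c : ι → K) (i : ι), c i ≠ 0 ∧ ∑ j, c j • b j = x ∧ w x = w (c i • b i) ∧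
      ∀ j ≠ i, w x < w (c j • b j) := by
  obtain ⟨c, rfl⟩ := hb.exists_eq_sum x
  obtain ⟨i, hi, hdom⟩ := hb.exists_dominant (c := c) fun h ↦ hx (by simp [h])
  have hval := map_sum_eq_of_forall_lt (f := fun i ↦ c i • b i) hdom
  exact ⟨c, i, hi, rfl, hval, by rwa [hval]⟩

lemma map_add_le_map_apply [FiniteDimensional K L] (hb : IsIncongruentBasis K w b)
    {T : L →ₗ[K] L} {d : Γ} (hT : ∀ i, w (b i) + d ≤ w (T (b i))) (x : L) : w x + d ≤ w (T x) := by
  rcases eq_or_ne x 0 with rfl | hx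
  · simp
  obtain ⟨c, i, -, hsum, hval, hdom⟩ := hb.exists_eq_sum_dominant hx
  conv_rhs => rw [← hsum, _root_.map_sum]
  refine w.map_le_sum fun j _ ↦ le_trans ?_ (map_smul_add_le (hT j) (c j))
  gcongr
  rcases eq_or_ne j i with rfl | hj
  · exact hval.le
  · exact (hdom j hj).le

/-- Only the dominant term of `x` matters, since all the others are raised by at least `d`. -/
lemma map_apply_eq_add [FiniteDimensional K L] (hb : IsIncongruentBasis K w b)
    {T : L →ₗ[K] L} {d : Γ} (hd : d ≠ ⊤) (hT : ∀ i, w (b i) + d ≤ w (T (b i))) {i : ι}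
    (hTi : w (T (b i)) = w (b i) + d) {x : L} {a : K} (hxi : w x = w (a • b i)) :
    w (T x) = w x + d := by
  rcases eq_or_ne x 0 with rfl | hx
  · simp
  obtain ⟨c, k, hck, hsum, hval, hdom⟩ := hb.exists_eq_sum_dominant hx
  obtain rfl : k = i := hb.eq_of_map_smul_eq_map_smul hck (hval.symm.trans hxi)
  have hTk : w (T (c k • b k)) = w x + d := by
    rw [hval, T.map_smul, Algebra.smul_def, Algebra.smul_def, w.map_mul, w.map_mul, hTi, add_assoc]
  rw [← hTk, ← hsum, map_sum]
  refine map_sum_eq_of_forall_lt (f := fun j ↦ T (c j • b j)) fun j hj ↦ ?_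
  rw [hTk]
  exact ((add_left_strictMono_of_ne_top hd) (hdom j hj)).trans_le (map_smul_add_le (hT j) (c j))

/-- The valuation changes by a bounded amount under `σ`; apply this to the powers of `x`. -/
lemma map_le_map_algEquiv [FiniteDimensional K L] {w : AddValuation L (WithTop ℤ)}
    (hb : IsIncongruentBasis K w b) (σ : L ≃ₐ[K] L) (x : L) : w x ≤ w (σ x) := by
  rcases eq_or_ne x 0 with rfl | hx
  · simp
  obtain ⟨d, hd⟩ : ∃ d : ℤ, ∀ i, w (b i) + d ≤ w (σ (b i)) := by
    choose n hn using fun i ↦ exists_map_eq_coe (w := w) (hb.ne_zero i)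
    choose k hk using fun i ↦ exists_map_eq_coe (w := w) ((map_ne_zero σ).2 (hb.ne_zero i))
    obtain ⟨d, hd⟩ := Set.finite_range (fun i ↦ k i - n i) |>.bddBelow
    refine ⟨d, fun i ↦ ?_⟩
    rw [hn, hk]
    have := hd (Set.mem_range_self i)
    norm_cast
    omega
  obtain ⟨n, hn⟩ := exists_map_eq_coe (w := w) hx
  obtain ⟨k, hk⟩ := exists_map_eq_coe (w := w) ((map_ne_zero σ).2 hx)
  have hpow : (|d| + 1) * n + d ≤ (|d| + 1) * k := by
    have := hb.map_add_le_map_apply (T := σ.toLinearMap) hd (x ^ (d.natAbs + 1))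
    rw [AlgEquiv.toLinearMap_apply, _root_.map_pow σ, map_pow_eq hn, map_pow_eq hk] at this
    norm_cast at this
    simpa using this
  rw [hn, hk, WithTop.coe_le_coe]
  by_contra! hlt
  nlinarith [neg_abs_le d, abs_nonneg d]

lemma map_algEquiv [FiniteDimensional K L] {w : AddValuation L (WithTop ℤ)}
    (hb : IsIncongruentBasis K w b) (σ : L ≃ₐ[K] L) (x : L) : w (σ x) = w x :=
  ((hb.map_le_map_algEquiv σ x).antisymm <| by
    simpa using hb.map_le_map_algEquiv σ⁻¹ (σ x)).symm

end IsIncongruentBasis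

end IncongruentBasis

section Operators

variable {K L : Type*} [Field K] [Field L] [Algebra K L] {p : ℕ} {σ : L ≃ₐ[K] L}

/-- The scaffold operator `Ψ₂ = σ₂ - 1`, where `σ₂ = σ ^ p`. -/
def scaffoldOp₂ (p : ℕ) (σ : L ≃ₐ[K] L) : Module.End K L :=
  (σ ^ p).toLinearMap - 1

lemma scaffoldOp₂_apply (y : L) : scaffoldOp₂ p σ y = (σ ^ p) y - y := rfl

lemma scaffoldOp₂_mul {z : L} (hz : (σ ^ p) z = z) (y : L) :
    scaffoldOp₂ p σ (y * z) = scaffoldOp₂ p σ y * z := by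
  rw [scaffoldOp₂_apply, scaffoldOp₂_apply, map_mul, hz, sub_mul]

lemma scaffoldOp₂_pow_mul {z : L} (hz : (σ ^ p) z = z) (k : ℕ) (y : L) :
    (scaffoldOp₂ p σ ^ k) (y * z) = (scaffoldOp₂ p σ ^ k) y * z := by
  induction k with
  | zero => rfl
  | succ k ih => rw [pow_succ', Module.End.mul_apply, ih, scaffoldOp₂_mul hz, Module.End.mul_apply]

variable [CharZero K] {μ : K}

/-- The binomial series for `(1 + Ψ) ^ μ`, truncated after `n` terms. -/
noncomputable def truncatedPow (μ : K) (n : ℕ) (Ψ : Module.End K L) : Module.End K L :=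
  ∑ k ∈ range n, Ring.choose μ k • Ψ ^ k

/-- The scaffold operator `Ψ₁ = σ σ₂^[μ] - 1`, where `σ₂^[μ]` is the truncated `μ`-th power of
`σ₂ = 1 + Ψ₂`. -/
noncomputable def scaffoldOp₁ (p : ℕ) (σ : L ≃ₐ[K] L) (μ : K) : Module.End K L :=
  σ.toLinearMap * truncatedPow μ p (scaffoldOp₂ p σ) - 1

lemma scaffoldOp₁_apply (y : L) :
    scaffoldOp₁ p σ μ y = σ (truncatedPow μ p (scaffoldOp₂ p σ) y) - y := rfl

lemma truncatedPow_scaffoldOp₂_mul {z : L} (hz : (σ ^ p) z = z) (n : ℕ) (y : L) :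
    truncatedPow μ n (scaffoldOp₂ p σ) (y * z) = truncatedPow μ n (scaffoldOp₂ p σ) y * z := by
  simp only [truncatedPow, LinearMap.sum_apply, LinearMap.smul_apply, scaffoldOp₂_pow_mul hz,
    sum_mul, smul_mul_assoc]

lemma scaffoldOp₁_mul {z : L} (hz : (σ ^ p) z = z) (y : L) :
    scaffoldOp₁ p σ μ (y * z) =
      y * (σ z - z) + (σ (truncatedPow μ p (scaffoldOp₂ p σ) y) - y) * σ z := by
  rw [scaffoldOp₁_apply, truncatedPow_scaffoldOp₂_mul hz, map_mul]
  ring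

end Operators

section ScaffoldPair

variable {K L : Type*} [Field K] [Field L] [Algebra K L] {p : ℕ} {σ : L ≃ₐ[K] L} {μ : K}
  [CharZero L] {w : AddValuation L (WithTop ℤ)} {b c : ℤ} {X Y : L}

/-- The elements `X`, `Y` behind a Galois scaffold with shift parameters `c` and `b`: up to the
stated errors `σ ^ p` fixes `X` and translates `Y` by `1`, while `σ` translates `X` by `1` and `Y`
by `-μ`. Then `Ψ₂` acts as a difference operator in `Y`, and `Ψ₁` as one in `X`. -/
structure IsScaffoldPair (w : AddValuation L (WithTop ℤ)) (p : ℕ) (σ : L ≃ₐ[K] L) (μ : K)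
    (b c : ℤ) (X Y : L) : Prop where
  prime : p.Prime
  map_prime_pos : 0 < w (p : L)
  pos_right : 0 < b
  pos_left : 0 < c
  map_left : w X = (-c : ℤ)
  map_right : w Y = (-b : ℤ)
  le_map_algebraMap : (-b : ℤ) ≤ w (algebraMap K L μ)
  pow_apply_left : (σ ^ p) X = X
  le_map_pow_apply_right : (c + 1 : ℤ) ≤ w ((σ ^ p) Y - Y - 1)
  map_apply_left_pos : 0 < w (σ X - X - 1)
  le_map_apply_right : (c + 1 - b : ℤ) ≤ w (σ Y + algebraMap K L μ - Y)
  isIncongruentBasis : IsIncongruentBasis K w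
    fun i : Fin p × Fin p ↦ Ring.choose Y (i.1 : ℕ) * Ring.choose X (i.2 : ℕ)

namespace IsScaffoldPair

variable {i j : ℕ}

lemma pow_apply_choose_left (h : IsScaffoldPair w p σ μ b c X Y) (j : ℕ) :
    (σ ^ p) (Ring.choose X j) = Ring.choose X j := by
  rw [Ring.map_choose, h.pow_apply_left]

lemma map_choose_right (h : IsScaffoldPair w p σ μ b c X Y) (hi : i < p) :
    w (Ring.choose Y i) = (i * -b : ℤ) :=
  map_choose_eq h.prime h.map_prime_pos (neg_neg_of_pos h.pos_right) h.map_right hi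

lemma map_choose_left (h : IsScaffoldPair w p σ μ b c X Y) (hj : j < p) :
    w (Ring.choose X j) = (j * -c : ℤ) :=
  map_choose_eq h.prime h.map_prime_pos (neg_neg_of_pos h.pos_left) h.map_left hj

lemma map_choose_mul_choose (h : IsScaffoldPair w p σ μ b c X Y) (hi : i < p) (hj : j < p) :
    w (Ring.choose Y i * Ring.choose X j) = (-(i * b + j * c) : ℤ) := by
  rw [map_mul_eq (h.map_choose_right hi) (h.map_choose_left hj)]
  congr 1
  ring

lemma le_map_scaffoldOp₂_choose_succ_sub (h : IsScaffoldPair w p σ μ b c X Y) (hi : i + 1 < p) :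
    (c + 1 - i * b : ℤ) ≤ w (scaffoldOp₂ p σ (Ring.choose Y (i + 1)) - Ring.choose Y i) := by
  rw [scaffoldOp₂_apply, Ring.map_choose]
  have hc : 0 ≤ c + 1 := (h.pos_left.trans (lt_add_one c)).le
  exact le_map_of_le (le_map_choose_succ_sub h.prime h.map_prime_pos (neg_nonpos.2 h.pos_right.le)
    hc h.map_right.ge h.le_map_pow_apply_right hi) (by linarith)

lemma map_scaffoldOp₂_choose_succ (h : IsScaffoldPair w p σ μ b c X Y) (hi : i + 1 < p) :
    w (scaffoldOp₂ p σ (Ring.choose Y (i + 1))) = w (Ring.choose Y i) := by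
  refine w.map_eq_of_lt_sub (lt_of_lt_of_le ?_ (h.le_map_scaffoldOp₂_choose_succ_sub hi))
  rw [h.map_choose_right (by omega), WithTop.coe_lt_coe]
  linarith [h.pos_left]

lemma scaffoldOp₂_choose_left (h : IsScaffoldPair w p σ μ b c X Y) (j : ℕ) :
    scaffoldOp₂ p σ (Ring.choose X j) = 0 := by
  rw [scaffoldOp₂_apply, h.pow_apply_choose_left, sub_self]

lemma map_scaffoldOp₂_basis (h : IsScaffoldPair w p σ μ b c X Y) (hi : i < p) (hi0 : i ≠ 0)
    (hj : j < p) :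
    w (scaffoldOp₂ p σ (Ring.choose Y i * Ring.choose X j)) =
      w (Ring.choose Y i * Ring.choose X j) + b := by
  obtain ⟨i, rfl⟩ := Nat.exists_eq_succ_of_ne_zero hi0
  rw [scaffoldOp₂_mul (h.pow_apply_choose_left j), w.map_mul, h.map_scaffoldOp₂_choose_succ hi,
    ← w.map_mul, h.map_choose_mul_choose (by omega) hj, h.map_choose_mul_choose hi hj,
    ← WithTop.coe_add]
  congr 1
  push_cast
  ring

lemma le_map_scaffoldOp₂_basis (h : IsScaffoldPair w p σ μ b c X Y) (hi : i < p) (hj : j < p) :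
    w (Ring.choose Y i * Ring.choose X j) + b ≤
      w (scaffoldOp₂ p σ (Ring.choose Y i * Ring.choose X j)) := by
  rcases eq_or_ne i 0 with rfl | hi0
  · simp [h.scaffoldOp₂_choose_left]
  · exact (h.map_scaffoldOp₂_basis hi hi0 hj).ge

lemma le_map_scaffoldOp₂ [FiniteDimensional K L] (h : IsScaffoldPair w p σ μ b c X Y) (x : L) :
    w x + b ≤ w (scaffoldOp₂ p σ x) :=
  h.isIncongruentBasis.map_add_le_map_apply (fun i ↦ h.le_map_scaffoldOp₂_basis i.1.2 i.2.2) x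

lemma le_map_scaffoldOp₂_pow [FiniteDimensional K L] (h : IsScaffoldPair w p σ μ b c X Y) {x : L}
    {n : ℤ} (hx : n ≤ w x) (k : ℕ) :
    (n + k * b : ℤ) ≤ w ((scaffoldOp₂ p σ ^ k) x) := by
  induction k with
  | zero => simpa using hx
  | succ k ih =>
    rw [pow_succ', Module.End.mul_apply]
    refine le_trans ?_ ((add_le_add_left ih _).trans (h.le_map_scaffoldOp₂ _))
    rw [← WithTop.coe_add, WithTop.coe_le_coe]
    push_cast
    linarith

lemma le_map_scaffoldOp₂_pow_choose_sub [FiniteDimensional K L]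
    (h : IsScaffoldPair w p σ μ b c X Y) {k : ℕ} (hik : i + k < p) :
    (c + 1 - i * b : ℤ) ≤
      w ((scaffoldOp₂ p σ ^ k) (Ring.choose Y (i + k)) - Ring.choose Y i) := by
  induction k with
  | zero => simp
  | succ k ih =>
    have hstep := h.le_map_scaffoldOp₂_pow (h.le_map_scaffoldOp₂_choose_succ_sub hik) k
    have hsplit : (scaffoldOp₂ p σ ^ (k + 1)) (Ring.choose Y (i + (k + 1))) - Ring.choose Y i =
        (scaffoldOp₂ p σ ^ k)
          (scaffoldOp₂ p σ (Ring.choose Y (i + k + 1)) - Ring.choose Y (i + k)) +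
        ((scaffoldOp₂ p σ ^ k) (Ring.choose Y (i + k)) - Ring.choose Y i) := by
      rw [pow_succ, Module.End.mul_apply, map_sub, ← add_assoc]
      ring
    rw [hsplit]
    refine w.map_le_add (le_map_of_le hstep ?_) (ih (by omega))
    rw [Nat.add_eq, Nat.cast_add]
    linarith

lemma le_map_scaffoldOp₂_pow_choose_of_lt [FiniteDimensional K L]
    (h : IsScaffoldPair w p σ μ b c X Y) {k : ℕ} (hi : i < p) (hik : i < k) :
    (c + 1 + (k - i) * b : ℤ) ≤ w ((scaffoldOp₂ p σ ^ k) (Ring.choose Y i)) := by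
  obtain ⟨k, rfl⟩ := Nat.exists_eq_add_of_lt hik
  have hone : scaffoldOp₂ p σ 1 = 0 := by rw [scaffoldOp₂_apply, _root_.map_one, sub_self]
  have hlow := h.le_map_scaffoldOp₂_pow_choose_sub (i := 0) (k := i) (by omega)
  have hsplit : (scaffoldOp₂ p σ ^ (i + k + 1)) (Ring.choose Y i) =
      (scaffoldOp₂ p σ ^ (k + 1))
        ((scaffoldOp₂ p σ ^ i) (Ring.choose Y (0 + i)) - Ring.choose Y 0) := by
    rw [map_sub, Ring.choose_zero_right, pow_succ _ k, Module.End.mul_apply _ _ (1 : L), hone,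
      map_zero, sub_zero, zero_add, ← pow_succ, ← Module.End.mul_apply, ← pow_add]
    congr 2
    omega
  rw [hsplit]
  refine le_map_of_le (h.le_map_scaffoldOp₂_pow hlow (k + 1)) (le_of_eq ?_)
  push_cast
  ring

lemma map_scaffoldOp₂_of_map_eq [FiniteDimensional K L] (h : IsScaffoldPair w p σ μ b c X Y)
    (hi : i < p) (hi0 : i ≠ 0) (hj : j < p) {a : K} {x : L}
    (hx : w x = w (a • (Ring.choose Y i * Ring.choose X j))) :
    w (scaffoldOp₂ p σ x) = w x + b :=
  h.isIncongruentBasis.map_apply_eq_add WithTop.coe_ne_top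
    (fun k ↦ h.le_map_scaffoldOp₂_basis k.1.2 k.2.2) (i := (⟨i, hi⟩, ⟨j, hj⟩))
    (h.map_scaffoldOp₂_basis hi hi0 hj) hx

lemma map_smul_choose_mul_choose (h : IsScaffoldPair w p σ μ b c X Y) (hi : i < p) (hj : j < p)
    (a : K) : w (a • (Ring.choose Y i * Ring.choose X j)) =
      w (algebraMap K L a) + (-(i * b + j * c) : ℤ) := by
  rw [Algebra.smul_def, w.map_mul, h.map_choose_mul_choose hi hj]

lemma map_scaffoldOp₂_pow_of_map_eq [FiniteDimensional K L] (h : IsScaffoldPair w p σ μ b c X Y)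
    {k : ℕ} (hik : i + k < p) (hj : j < p) {a : K} {x : L}
    (hx : w x = w (a • (Ring.choose Y (i + k) * Ring.choose X j))) :
    w ((scaffoldOp₂ p σ ^ k) x) = w (a • (Ring.choose Y i * Ring.choose X j)) := by
  induction k generalizing x with
  | zero => exact hx
  | succ k ih =>
    rw [pow_succ, Module.End.mul_apply]
    refine ih (by omega) ?_
    rw [h.map_scaffoldOp₂_of_map_eq hik (Nat.succ_ne_zero _) hj hx, hx,
      h.map_smul_choose_mul_choose hik hj, h.map_smul_choose_mul_choose (by omega) hj, add_assoc,
      ← WithTop.coe_add]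
    congr 2
    push_cast
    ring

lemma map_apply_choose_left_sub (h : IsScaffoldPair w p σ μ b c X Y) (hj : j + 1 < p) :
    w (σ (Ring.choose X (j + 1)) - Ring.choose X (j + 1)) = (j * -c : ℤ) := by
  have hnonpos : -c ≤ 0 := neg_nonpos.2 h.pos_left.le
  have herr := le_map_choose_succ_sub h.prime h.map_prime_pos hnonpos zero_le_one h.map_left.ge
    (map_pos_iff_one_le.1 h.map_apply_left_pos) hj
  rw [← h.map_choose_left (by omega), Ring.map_choose]
  refine w.map_eq_of_lt_sub (lt_of_lt_of_le ?_ herr)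
  rw [h.map_choose_left (by omega), WithTop.coe_lt_coe]
  omega

variable [CharZero K]

/-- Vandermonde's identity: were `Ψ₂` exactly a difference operator in `Y`, its truncated power
would be the translation by `μ`. -/
lemma le_map_truncatedPow_choose_sub [FiniteDimensional K L]
    (h : IsScaffoldPair w p σ μ b c X Y) (hi : i < p) :
    (c + 1 - i * b : ℤ) ≤ w (truncatedPow μ p (scaffoldOp₂ p σ) (Ring.choose Y i) -
      Ring.choose (algebraMap K L μ + Y) i) := by
  have hcoeff {k : ℕ} (hk : k < p) : (k * -b : ℤ) ≤ w (Ring.choose (algebraMap K L μ) k) :=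
    le_map_choose h.prime h.map_prime_pos (neg_nonpos.2 h.pos_right.le) h.le_map_algebraMap hk
  have hsplit : truncatedPow μ p (scaffoldOp₂ p σ) (Ring.choose Y i) -
      Ring.choose (algebraMap K L μ + Y) i =
        ∑ k ∈ range (i + 1), Ring.choose (algebraMap K L μ) k *
          ((scaffoldOp₂ p σ ^ k) (Ring.choose Y i) - Ring.choose Y (i - k)) +
        ∑ k ∈ Ico (i + 1) p, Ring.choose (algebraMap K L μ) k *
          (scaffoldOp₂ p σ ^ k) (Ring.choose Y i) := by
    rw [Ring.add_choose_eq i (Commute.all _ _), Nat.sum_antidiagonal_eq_sum_range_succ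
      fun k l ↦ Ring.choose (algebraMap K L μ) k * Ring.choose Y l]
    have hsum : truncatedPow μ p (scaffoldOp₂ p σ) (Ring.choose Y i) =
        ∑ k ∈ range p, Ring.choose (algebraMap K L μ) k *
          (scaffoldOp₂ p σ ^ k) (Ring.choose Y i) := by
      simp only [truncatedPow, LinearMap.sum_apply, LinearMap.smul_apply,
        Algebra.smul_def (A := L), Ring.map_choose (algebraMap K L)]
    rw [hsum, ← sum_range_add_sum_Ico _ (Nat.succ_le_of_lt hi)]
    simp only [mul_sub, sum_sub_distrib]
    ring
  rw [hsplit]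
  refine w.map_le_add (w.map_le_sum fun k hk ↦ ?_) (w.map_le_sum fun k hk ↦ ?_)
  · obtain ⟨l, rfl⟩ := Nat.exists_eq_add_of_le' (mem_range_succ_iff.1 hk)
    rw [Nat.add_sub_cancel]
    refine le_map_of_le (le_map_mul (hcoeff (by omega))
      (h.le_map_scaffoldOp₂_pow_choose_sub hi)) (le_of_eq ?_)
    push_cast
    ring
  · rw [mem_Ico] at hk
    exact le_map_of_le (le_map_mul (hcoeff hk.2)
      (h.le_map_scaffoldOp₂_pow_choose_of_lt hi (by omega))) (le_of_eq (by ring))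

lemma le_map_apply_truncatedPow_choose_sub [FiniteDimensional K L]
    (h : IsScaffoldPair w p σ μ b c X Y) (hi : i < p) :
    (c + 1 - i * b : ℤ) ≤
      w (σ (truncatedPow μ p (scaffoldOp₂ p σ) (Ring.choose Y i)) - Ring.choose Y i) := by
  have htrans := h.le_map_truncatedPow_choose_sub hi
  rw [← h.isIncongruentBasis.map_algEquiv σ, map_sub, Ring.map_choose σ (_ + _), map_add,
    AlgEquiv.commutes, add_comm (algebraMap K L μ)] at htrans
  have hle : (-b : ℤ) ≤ w (σ Y + algebraMap K L μ) := by
    refine w.map_le_add ?_ h.le_map_algebraMap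
    rw [h.isIncongruentBasis.map_algEquiv, h.map_right]
  have hclose := le_map_choose_sub_choose h.prime h.map_prime_pos (neg_nonpos.2 h.pos_right.le) hle
    h.map_right.ge h.le_map_apply_right hi
  rw [← sub_add_sub_cancel _ (Ring.choose (σ Y + algebraMap K L μ) i)]
  exact w.map_le_add htrans (le_map_of_le hclose (by linarith))

lemma le_map_scaffoldOp₁_basis_sub [FiniteDimensional K L]
    (h : IsScaffoldPair w p σ μ b c X Y) (hi : i < p) (hj : j < p) :
    (-(i * b + j * c) + c + 1 : ℤ) ≤ w (scaffoldOp₁ p σ μ (Ring.choose Y i * Ring.choose X j) -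
      Ring.choose Y i * (σ (Ring.choose X j) - Ring.choose X j)) := by
  have hσX : w (σ (Ring.choose X j)) = (j * -c : ℤ) := by
    rw [h.isIncongruentBasis.map_algEquiv, h.map_choose_left hj]
  rw [scaffoldOp₁_mul (h.pow_apply_choose_left j), add_sub_cancel_left]
  exact le_map_of_le (le_map_mul (h.le_map_apply_truncatedPow_choose_sub hi) hσX.ge)
    (le_of_eq (by ring))

lemma map_scaffoldOp₁_basis [FiniteDimensional K L] (h : IsScaffoldPair w p σ μ b c X Y)
    (hi : i < p) (hj : j < p) (hj0 : j ≠ 0) :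
    w (scaffoldOp₁ p σ μ (Ring.choose Y i * Ring.choose X j)) =
      w (Ring.choose Y i * Ring.choose X j) + c := by
  obtain ⟨j, rfl⟩ := Nat.exists_eq_succ_of_ne_zero hj0
  have hmain : w (Ring.choose Y i * (σ (Ring.choose X (j + 1)) - Ring.choose X (j + 1))) =
      (-(i * b + (j + 1 : ℕ) * c) + c : ℤ) := by
    rw [map_mul_eq (h.map_choose_right hi) (h.map_apply_choose_left_sub hj)]
    congr 1
    push_cast
    ring
  rw [h.map_choose_mul_choose hi hj, ← WithTop.coe_add, ← hmain]
  refine w.map_eq_of_lt_sub (lt_of_lt_of_le ?_ (h.le_map_scaffoldOp₁_basis_sub hi hj))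
  rw [hmain, WithTop.coe_lt_coe]
  exact lt_add_one _

lemma le_map_scaffoldOp₁_basis [FiniteDimensional K L] (h : IsScaffoldPair w p σ μ b c X Y)
    (hi : i < p) (hj : j < p) :
    w (Ring.choose Y i * Ring.choose X j) + c ≤
      w (scaffoldOp₁ p σ μ (Ring.choose Y i * Ring.choose X j)) := by
  rcases eq_or_ne j 0 with rfl | hj0
  · have herr := h.le_map_scaffoldOp₁_basis_sub hi hj
    rw [(by simp : σ (Ring.choose X 0) - Ring.choose X 0 = 0), mul_zero, sub_zero] at herr
    rw [h.map_choose_mul_choose hi hj]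
    exact le_map_of_le herr (lt_add_one _).le
  · exact (h.map_scaffoldOp₁_basis hi hj hj0).ge

lemma map_scaffoldOp₁_of_map_eq [FiniteDimensional K L] (h : IsScaffoldPair w p σ μ b c X Y)
    (hi : i < p) (hj : j < p) (hj0 : j ≠ 0) {a : K} {x : L}
    (hx : w x = w (a • (Ring.choose Y i * Ring.choose X j))) :
    w (scaffoldOp₁ p σ μ x) = w x + c :=
  h.isIncongruentBasis.map_apply_eq_add WithTop.coe_ne_top
    (fun k ↦ h.le_map_scaffoldOp₁_basis k.1.2 k.2.2) (i := (⟨i, hi⟩, ⟨j, hj⟩))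
    (h.map_scaffoldOp₁_basis hi hj hj0) hx

lemma map_scaffoldOp₁_pow_of_map_eq [FiniteDimensional K L] (h : IsScaffoldPair w p σ μ b c X Y)
    (hi : i < p) {k : ℕ} (hjk : j + k < p) {a : K} {x : L}
    (hx : w x = w (a • (Ring.choose Y i * Ring.choose X (j + k)))) :
    w ((scaffoldOp₁ p σ μ ^ k) x) = w (a • (Ring.choose Y i * Ring.choose X j)) := by
  induction k generalizing x with
  | zero => exact hx
  | succ k ih =>
    rw [pow_succ, Module.End.mul_apply]
    refine ih (by omega) ?_
    rw [h.map_scaffoldOp₁_of_map_eq hi hjk (Nat.succ_ne_zero _) hx, hx,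
      h.map_smul_choose_mul_choose hi hjk, h.map_smul_choose_mul_choose hi (by omega), add_assoc,
      ← WithTop.coe_add]
    congr 2
    push_cast
    ring

theorem map_scaffoldOp₁_pow_mul_scaffoldOp₂_pow [FiniteDimensional K L]
    (h : IsScaffoldPair w p σ μ b c X Y) (hi : i < p) (hj : j < p) {a : K} {x : L}
    (hx : w x = w (a • (Ring.choose Y (p - 1) * Ring.choose X (p - 1)))) :
    w ((scaffoldOp₁ p σ μ ^ i * scaffoldOp₂ p σ ^ j) x) = w x + (j * b + i * c : ℤ) := by
  obtain ⟨k, hk⟩ : ∃ k, p - 1 = k + i := ⟨p - 1 - i, by omega⟩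
  obtain ⟨l, hl⟩ : ∃ l, p - 1 = l + j := ⟨p - 1 - j, by omega⟩
  have htwo : w ((scaffoldOp₂ p σ ^ j) x) = w (a • (Ring.choose Y l * Ring.choose X (k + i))) :=
    h.map_scaffoldOp₂_pow_of_map_eq (by omega) (by omega) (by rwa [← hl, ← hk])
  rw [Module.End.mul_apply, h.map_scaffoldOp₁_pow_of_map_eq (by omega) (by omega) htwo, hx,
    h.map_smul_choose_mul_choose (by omega) (by omega),
    h.map_smul_choose_mul_choose (by omega) (by omega), add_assoc, ← WithTop.coe_add]
  congr 2
  nth_rw 1 [hl]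
  rw [hk]
  push_cast
  ring

end IsScaffoldPair

end ScaffoldPair

section Translation

variable {K L : Type*} [Field K] [Field L] [Algebra K L] {w : AddValuation L (WithTop ℤ)}
  {σ : L ≃ₐ[K] L} {n k : ℤ} {x y z : L}

lemma map_pow_algEquiv (hσ : ∀ y, w (σ y) = w y) (i : ℕ) (y : L) : w ((σ ^ i) y) = w y := by
  induction i with
  | zero => rfl
  | succ i ih => rw [pow_succ', AlgEquiv.mul_apply, hσ, ih]

lemma le_map_pow_apply_sub_sub_natCast (hσ : ∀ y, w (σ y) = w y) (hx : n ≤ w (σ x - x - 1))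
    (i : ℕ) : n ≤ w ((σ ^ i) x - x - i) := by
  induction i with
  | zero => simp
  | succ i ih =>
    have hsplit : (σ ^ (i + 1)) x - x - (i + 1 : ℕ) =
        σ ((σ ^ i) x - x - i) + (σ x - x - 1) := by
      rw [pow_succ', AlgEquiv.mul_apply, map_sub, map_sub, map_natCast, Nat.cast_succ]
      ring
    rw [hsplit]
    exact w.map_le_add (ih.trans (hσ _).ge) hx

variable {p : ℕ}

lemma map_wittCarry (x y : L) : σ (wittCarry p x y) = wittCarry p (σ x) (σ y) := by
  simp only [wittCarry, map_div₀, map_sub, map_add, _root_.map_pow, map_natCast]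

variable [CharZero L]

lemma le_map_wittCarry_add_sub (hp : p.Prime) (hn : n ≤ 0) (hx : n ≤ w x) (hy : n ≤ w y)
    (hk : 0 ≤ k) (hz : k ≤ w z) :
    ((p - 1) * n + k : ℤ) ≤ w (wittCarry p (x + z) y - wittCarry p x y) := by
  have hcocycle : wittCarry p (x + z) y - wittCarry p x y =
      wittCarry p (x + y) z - wittCarry p x z := by
    simp only [wittCarry]
    ring
  rw [hcocycle]
  exact w.map_le_sub (le_map_wittCarry_of_nonneg hp hn (w.map_le_add hx hy) hk hz)
    (le_map_wittCarry_of_nonneg hp hn hx hk hz)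

/-- In Witt vectors of length two, `i • (1, 0) = (i, (i - i ^ p) / p)`. -/
lemma map_pow_apply_sub_sub_wittCarry_pos (hp : p.Prime) (hσ : ∀ y, w (σ y) = w y)
    (hn : n ≤ 0) (hx : n ≤ w x) (hk : 0 ≤ k) (hkn : 0 < (p - 1) * n + k)
    (hσx : k ≤ w (σ x - x - 1)) (hσz : 0 < w (σ z - z - wittCarry p x 1)) (i : ℕ) :
    0 < w ((σ ^ i) z - z - (wittCarry p x i + (i - i ^ p) / p)) := by
  induction i with
  | zero => simp [wittCarry, hp.ne_zero]
  | succ i ih =>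
    have hσix := le_map_pow_apply_sub_sub_natCast hσ hσx i
    have hxi : n ≤ w (x + i) := w.map_le_add hx (le_map_of_le (zero_le_map_natCast i) hn)
    have hcarry := le_map_wittCarry_add_sub hp hn hxi (le_map_of_le w.map_one.ge hn) hk hσix
    have hsplit : (σ ^ (i + 1)) z - z -
          (wittCarry p x (i + 1 : ℕ) + ((i + 1 : ℕ) - (i + 1 : ℕ) ^ p) / p) =
        (σ ^ i) (σ z - z - wittCarry p x 1) +
          (wittCarry p (x + i + ((σ ^ i) x - x - i)) 1 - wittCarry p (x + i) 1) +
          ((σ ^ i) z - z - (wittCarry p x i + (i - i ^ p) / p)) := by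
      have hadd := wittCarry_add_wittCarry (p := p) x (i : L) 1
      have hone : wittCarry p (i : L) 1 =
          (i : L) ^ p / p + 1 / p - ((i + 1 : ℕ) : L) ^ p / p := by
        rw [wittCarry, one_pow, Nat.cast_succ]
        ring
      rw [pow_succ, AlgEquiv.mul_apply, map_sub (σ ^ i), map_sub (σ ^ i), map_wittCarry,
        _root_.map_one (σ ^ i), (by ring : x + i + ((σ ^ i) x - x - i) = (σ ^ i) x)]
      rw [hone] at hadd
      push_cast at hadd ⊢
      linear_combination hadd
    rw [hsplit]
    refine w.map_lt_add (w.map_lt_add ?_ ?_) ih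
    · rwa [map_pow_algEquiv hσ]
    · exact (WithTop.coe_lt_coe.2 hkn).trans_le hcarry

end Translation

section Incongruence

lemma eq_of_dvd_sub_mul {p : ℕ} (hp : p.Prime) {r : ℤ} (hr : ¬ (p : ℤ) ∣ r) {i j : ℕ}
    (hi : i < p) (hj : j < p) (h : (p : ℤ) ∣ (i - j) * r) : i = j := by
  have hdvd : (p : ℤ) ∣ i - j :=
    ((Nat.prime_iff_prime_int.1 hp).dvd_or_dvd h).resolve_right hr
  have hmod : j ≡ i [MOD p] := Nat.modEq_iff_dvd.2 hdvd
  exact (hmod.eq_of_lt_of_lt hj hi).symm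

lemma eq_and_eq_of_sq_dvd_sub {p : ℕ} (hp : p.Prime) {r : ℤ} (hr : ¬ (p : ℤ) ∣ r) (m : ℤ)
    {i j i' j' : ℕ} (hi : i < p) (hj : j < p) (hi' : i' < p) (hj' : j' < p)
    (h : (p : ℤ) ^ 2 ∣ (i * (p ^ 2 * m + r) + j * (p * r)) -
      (i' * (p ^ 2 * m + r) + j' * (p * r))) : i = i' ∧ j = j' := by
  obtain ⟨q, hq⟩ := h
  obtain rfl : i = i' := eq_of_dvd_sub_mul hp hr hi hi'
    ⟨p * q - p * m * (i - i') - r * (j - j'), by linear_combination hq⟩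
  refine ⟨rfl, eq_of_dvd_sub_mul hp hr hj hj' ⟨q, ?_⟩⟩
  have hp0 : (p : ℤ) ≠ 0 := by exact_mod_cast hp.ne_zero
  exact mul_left_cancel₀ hp0 (by linear_combination hq)

end Incongruence

section WittGenerator

variable {K L : Type*} [Field K] [Field L] [Algebra K L]
  {v : AddValuation K (WithTop ℤ)} {w : AddValuation L (WithTop ℤ)} {p : ℕ} {σ : L ≃ₐ[K] L}
  {a μ : K} {e m r : ℤ} {x₁ x₂ : L}

/-- `(x₁, x₂)` is a Witt vector of length two over a totally ramified
extension `L` of `K` of degree `p ^ 2` which solves the Artin–Schreier equation with right-hand side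
`(a, μ ^ p * a)`, and `σ` sends it to its sum with `(1, 0)`, up to small errors. The integers
`e`, `r`, `m` are the absolute ramification index of `K` and the pole orders of `a` and `μ`. -/
structure IsWittGenerator (v : AddValuation K (WithTop ℤ)) (w : AddValuation L (WithTop ℤ)) (p : ℕ)
    (σ : L ≃ₐ[K] L) (a μ : K) (e m r : ℤ) (x₁ x₂ : L) : Prop where
  prime : p.Prime
  finrank_eq : Module.finrank K L = p ^ 2
  map_algebraMap : ∀ c : K, w (algebraMap K L c) = p ^ 2 • v c
  map_prime : v (p : K) = e
  map_base : v a = (-r : ℤ)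
  map_shift : v μ = (-m : ℤ)
  pos : 0 < r
  not_dvd : ¬ (p : ℤ) ∣ r
  mul_lt_shift : ((p : ℤ) ^ 2 - 1) * r < p ^ 2 * m
  shift_lt_prime : (p : ℤ) ^ 2 * (p - 1) * m + (2 * p * (p - 1) + 1) * r < p ^ 2 * e
  artinSchreier_left : x₁ ^ p - x₁ = algebraMap K L a
  artinSchreier_right :
    x₂ ^ p - x₂ = algebraMap K L (μ ^ p * a) + wittCarry p x₁ (algebraMap K L a)
  le_map_apply_left : (p ^ 2 * e - p * (p - 1) * r : ℤ) ≤ w (σ x₁ - x₁ - 1)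
  map_apply_right_pos : 0 < w (σ x₂ - x₂ - wittCarry p x₁ 1)

namespace IsWittGenerator

lemma map_algebraMap_eq (h : IsWittGenerator v w p σ a μ e m r x₁ x₂) {c : K} {n : ℤ}
    (hc : v c = n) : w (algebraMap K L c) = (p ^ 2 * n : ℤ) := by
  rw [h.map_algebraMap, hc, ← WithTop.coe_nsmul, nsmul_eq_mul]
  push_cast
  rfl

lemma map_natCast_prime (h : IsWittGenerator v w p σ a μ e m r x₁ x₂) :
    w (p : L) = (p ^ 2 * e : ℤ) := by
  rw [← map_natCast (algebraMap K L), h.map_algebraMap_eq h.map_prime]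

lemma two_le (h : IsWittGenerator v w p σ a μ e m r x₁ x₂) : (2 : ℤ) ≤ p := by
  exact_mod_cast h.prime.two_le

lemma pos_shift (h : IsWittGenerator v w p σ a μ e m r x₁ x₂) : 0 < m := by
  have := h.mul_lt_shift
  have := h.pos
  have := h.two_le
  by_contra! hm
  nlinarith [mul_nonneg (by nlinarith : (0 : ℤ) ≤ p ^ 2 - 1) h.pos.le,
    mul_nonneg (sq_nonneg (p : ℤ)) (neg_nonneg.2 hm)]

lemma mul_lt_prime (h : IsWittGenerator v w p σ a μ e m r x₁ x₂) :
    2 * (p : ℤ) * (p - 1) * r < p ^ 2 * e := by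
  have hp := h.two_le
  have hm : 0 < (p : ℤ) ^ 2 * (p - 1) * m :=
    mul_pos (mul_pos (by positivity) (by linarith)) h.pos_shift
  nlinarith [h.shift_lt_prime, h.pos]

lemma map_prime_pos (h : IsWittGenerator v w p σ a μ e m r x₁ x₂) : 0 < w (p : L) := by
  rw [h.map_natCast_prime]
  have hp := h.two_le
  have : 0 < 2 * (p : ℤ) * (p - 1) * r := mul_pos (by nlinarith) h.pos
  exact_mod_cast this.trans h.mul_lt_prime

lemma map_left (h : IsWittGenerator v w p σ a μ e m r x₁ x₂) : w x₁ = (-(p * r) : ℤ) := by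
  refine map_eq_of_map_pow_sub_self_eq h.prime.one_lt (by nlinarith [h.two_le, h.pos]) ?_
  rw [h.artinSchreier_left, h.map_algebraMap_eq h.map_base]
  congr 1
  ring

lemma map_shift_mul_left (h : IsWittGenerator v w p σ a μ e m r x₁ x₂) :
    w (algebraMap K L μ * x₁) = (-(p ^ 2 * m + p * r) : ℤ) := by
  rw [map_mul_eq (h.map_algebraMap_eq h.map_shift) h.map_left]
  congr 1
  ring

variable [CharZero L]

lemma le_map_wittCarry_left (h : IsWittGenerator v w p σ a μ e m r x₁ x₂) :
    (-(p ^ 3 * r) : ℤ) ≤ w (wittCarry p x₁ (algebraMap K L a)) := by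
  have hr := h.pos
  have hp := h.two_le
  refine le_map_of_le (le_map_wittCarry (n := -(p ^ 2 * r)) h.prime
    (le_map_of_le h.map_left.ge (by nlinarith [mul_pos (by linarith : (0 : ℤ) < p) hr])) ?_)
    (le_of_eq (by ring))
  rw [h.map_algebraMap_eq h.map_base, mul_neg]

lemma map_right (h : IsWittGenerator v w p σ a μ e m r x₁ x₂) :
    w x₂ = (-(p ^ 2 * m + p * r) : ℤ) := by
  have hp := h.two_le
  have hr := h.pos
  have hm := h.pos_shift
  have hmain : w (algebraMap K L (μ ^ p * a)) = (p * -(p ^ 2 * m + p * r) : ℤ) := by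
    rw [h.map_algebraMap_eq (map_mul_eq (map_pow_eq h.map_shift p) h.map_base)]
    congr 1
    ring
  refine map_eq_of_map_pow_sub_self_eq h.prime.one_lt (by nlinarith) ?_
  rw [h.artinSchreier_right, ← hmain]
  refine w.map_add_eq_of_lt_left (lt_of_lt_of_le ?_ h.le_map_wittCarry_left)
  have hlt : (p : ℤ) ^ 2 * r < p ^ 2 * m + p * r := by nlinarith [h.mul_lt_shift]
  rw [hmain, WithTop.coe_lt_coe]
  linarith [mul_lt_mul_of_pos_left hlt (by linarith : (0 : ℤ) < p)]

/-- The leading terms of `x₂` and `μ * x₁` cancel; the valuation of the difference is read off its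
`p`-th power, whose leading term is `-μ ^ p * x₁`. -/
lemma map_sub_shift_mul (h : IsWittGenerator v w p σ a μ e m r x₁ x₂) :
    w (x₂ - algebraMap K L μ * x₁) = (-(p ^ 2 * m + r) : ℤ) := by
  have hp := h.two_le
  have hr := h.pos
  have hm := h.pos_shift
  set y := x₂ - algebraMap K L μ * x₁ with hy
  have hyle : (-(p ^ 2 * m + p * r) : ℤ) ≤ w y :=
    w.map_le_sub h.map_right.ge h.map_shift_mul_left.ge
  have hpow : y ^ p = -(algebraMap K L μ ^ p * x₁) +
      (x₂ + wittCarry p x₁ (algebraMap K L a) + p * wittCarry p y (algebraMap K L μ * x₁)) := by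
    have h₂ := h.artinSchreier_right
    rw [map_mul, map_pow] at h₂
    rw [mul_wittCarry h.prime.ne_zero, hy, sub_add_cancel, mul_pow]
    linear_combination h₂ - algebraMap K L μ ^ p * h.artinSchreier_left
  have hmain : w (-(algebraMap K L μ ^ p * x₁)) = (p * -(p ^ 2 * m + r) : ℤ) := by
    rw [w.map_neg, map_mul_eq (map_pow_eq (h.map_algebraMap_eq h.map_shift) p) h.map_left]
    congr 1
    ring
  have herr : (p * -(p ^ 2 * m + r) + 1 : ℤ) ≤ w (x₂ + wittCarry p x₁ (algebraMap K L a) +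
      p * wittCarry p y (algebraMap K L μ * x₁)) := by
    refine w.map_le_add (w.map_le_add (le_map_of_le h.map_right.ge ?_)
      (le_map_of_le h.le_map_wittCarry_left ?_)) (le_map_of_le (le_map_mul h.map_natCast_prime.ge
        (le_map_wittCarry h.prime hyle h.map_shift_mul_left.ge)) ?_)
    · nlinarith [mul_pos (by positivity : (0 : ℤ) < p ^ 2) hm]
    · nlinarith [h.mul_lt_shift]
    · nlinarith [h.mul_lt_prime, mul_pos (by linarith : (0 : ℤ) < p) hr]
  refine map_eq_of_map_pow_eq h.prime.ne_zero ?_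
  rw [hpow, ← hmain]
  refine w.map_add_eq_of_lt_left (lt_of_lt_of_le ?_ herr)
  rw [hmain, WithTop.coe_lt_coe]
  exact lt_add_one _

lemma isIncongruentBasis (h : IsWittGenerator v w p σ a μ e m r x₁ x₂) :
    IsIncongruentBasis K w fun i : Fin p × Fin p ↦
      Ring.choose (x₂ - algebraMap K L μ * x₁) (i.1 : ℕ) * Ring.choose x₁ (i.2 : ℕ) := by
  have hval (i : Fin p × Fin p) : w (Ring.choose (x₂ - algebraMap K L μ * x₁) (i.1 : ℕ) *
      Ring.choose x₁ (i.2 : ℕ)) = (-(i.1 * (p ^ 2 * m + r) + i.2 * (p * r)) : ℤ) := by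
    have hpr : 0 < p * r := mul_pos (by linarith [h.two_le]) h.pos
    have hpm : 0 < p ^ 2 * m := mul_pos (by nlinarith [h.two_le]) h.pos_shift
    rw [map_mul_eq
      (map_choose_eq h.prime h.map_prime_pos (by linarith [h.pos]) h.map_sub_shift_mul i.1.2)
      (map_choose_eq h.prime h.map_prime_pos (neg_neg_of_pos hpr) h.map_left i.2.2)]
    congr 1
    ring
  refine ⟨fun i hi ↦ ?_, fun i j c hij ↦ ?_, by simp [h.finrank_eq, sq]⟩
  · exact WithTop.coe_ne_top ((hval i).symm.trans (w.top_iff.2 hi))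
  · rw [hval, Algebra.smul_def, w.map_mul, hval, h.map_algebraMap] at hij
    cases hc : v c with
    | top =>
      have htop : p ^ 2 • (⊤ : WithTop ℤ) = ⊤ := by
        rw [← Nat.succ_pred_eq_of_pos (pow_pos h.prime.pos 2), succ_nsmul, add_top]
      rw [hc, htop, top_add] at hij
      exact absurd hij WithTop.coe_ne_top
    | coe n =>
      rw [hc, ← WithTop.coe_nsmul, ← WithTop.coe_add, WithTop.coe_inj, nsmul_eq_mul] at hij
      push_cast at hij
      have hdvd := eq_and_eq_of_sq_dvd_sub h.prime h.not_dvd m i.1.2 i.2.2 j.1.2 j.2.2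
        ⟨-n, by linear_combination -hij⟩
      exact Prod.ext (Fin.ext hdvd.1) (Fin.ext hdvd.2)

lemma pow_apply_left [FiniteDimensional K L] (h : IsWittGenerator v w p σ a μ e m r x₁ x₂) :
    (σ ^ p) x₁ = x₁ := by
  have hpr : 0 < p * r := mul_pos (by linarith [h.two_le]) h.pos
  have hle := le_map_pow_apply_sub_sub_natCast (h.isIncongruentBasis.map_algEquiv σ)
    h.le_map_apply_left p
  have hpos : 0 < w ((σ ^ p) x₁ - x₁) := by
    rw [← sub_add_cancel ((σ ^ p) x₁ - x₁) (p : L)]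
    refine w.map_lt_add (lt_of_lt_of_le ?_ hle) h.map_prime_pos
    exact WithTop.coe_lt_coe.2 (by nlinarith [h.mul_lt_prime, h.two_le])
  refine sub_eq_zero.1 (eq_zero_of_artinSchreier_eq h.prime (neg_nonpos.2 hpr.le) h.map_left.ge
    hpos h.map_natCast_prime (by nlinarith [h.mul_lt_prime, h.two_le]) ?_)
  rw [add_sub_cancel, ← map_pow, ← map_sub, h.artinSchreier_left, AlgEquiv.commutes]

lemma map_pow_apply_right_pos [FiniteDimensional K L]
    (h : IsWittGenerator v w p σ a μ e m r x₁ x₂) : 0 < w ((σ ^ p) x₂ - x₂ - 1) := by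
  have hp := h.two_le
  have hpr : 0 < p * r := mul_pos (by linarith) h.pos
  have he := h.mul_lt_prime
  have htrans := map_pow_apply_sub_sub_wittCarry_pos h.prime
    (h.isIncongruentBasis.map_algEquiv σ) (neg_nonpos.2 hpr.le) h.map_left.ge (by nlinarith)
    (by nlinarith) h.le_map_apply_left h.map_apply_right_pos p
  have hcarry : 0 < w (wittCarry p x₁ (p : L)) := by
    refine lt_of_lt_of_le (WithTop.coe_lt_coe.2 ?_) (le_map_wittCarry_of_nonneg h.prime
      (neg_nonpos.2 hpr.le) h.map_left.ge (by nlinarith) h.map_natCast_prime.ge)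
    nlinarith
  have hpow : 0 < w ((p : L) ^ (p - 1)) := by
    rw [w.map_pow]
    exact nsmul_pos h.map_prime_pos (Nat.sub_ne_zero_of_lt h.prime.one_lt)
  have hquot : ((p : L) - p ^ p) / p = 1 - p ^ (p - 1) := by
    have hp0 : (p : L) ≠ 0 := by exact_mod_cast h.prime.ne_zero
    rw [sub_div, div_self hp0, div_eq_of_eq_mul hp0 (pow_sub_one_mul h.prime.ne_zero _).symm]
  have hsplit : (σ ^ p) x₂ - x₂ - 1 = (σ ^ p) x₂ - x₂ - (wittCarry p x₁ p + (p - p ^ p) / p) +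
      wittCarry p x₁ p - p ^ (p - 1) := by
    rw [hquot]
    ring
  rw [hsplit, sub_eq_add_neg]
  exact w.map_lt_add (w.map_lt_add htrans hcarry) (by rwa [w.map_neg])

lemma le_map_pow_apply_right [FiniteDimensional K L]
    (h : IsWittGenerator v w p σ a μ e m r x₁ x₂) :
    (p * r + 1 : ℤ) ≤ w ((σ ^ p) x₂ - x₂ - 1) := by
  have hp := h.two_le
  have hpr : 0 < p * r := mul_pos (by linarith) h.pos
  have hpm : 0 < p ^ 2 * m := mul_pos (by nlinarith) h.pos_shift
  have he := h.mul_lt_prime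
  refine le_map_of_le (le_map_of_artinSchreier_eq h.prime (by linarith) h.map_right.ge
    h.map_pow_apply_right_pos h.map_natCast_prime (by nlinarith) ?_) ?_
  · rw [(by ring : x₂ + (1 + ((σ ^ p) x₂ - x₂ - 1)) = (σ ^ p) x₂), ← map_pow, ← map_sub,
      h.artinSchreier_right, map_add, map_wittCarry, h.pow_apply_left, AlgEquiv.commutes,
      AlgEquiv.commutes]
  · nlinarith [h.shift_lt_prime, mul_nonneg (sq_nonneg (p - 1 : ℤ)) h.pos.le]

lemma le_map_apply_sub_shift_mul (h : IsWittGenerator v w p σ a μ e m r x₁ x₂) :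
    (p * r + 1 - (p ^ 2 * m + r) : ℤ) ≤
      w (σ (x₂ - algebraMap K L μ * x₁) + algebraMap K L μ - (x₂ - algebraMap K L μ * x₁)) := by
  have hp := h.two_le
  have hr := h.pos
  have hm := h.mul_lt_shift
  have hpr : 0 < p * r := mul_pos (by linarith) hr
  have hsplit : σ (x₂ - algebraMap K L μ * x₁) + algebraMap K L μ - (x₂ - algebraMap K L μ * x₁) =
      (σ x₂ - x₂ - wittCarry p x₁ 1) + wittCarry p x₁ 1 -
        algebraMap K L μ * (σ x₁ - x₁ - 1) := by
    rw [map_sub, map_mul, AlgEquiv.commutes]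
    ring
  rw [hsplit]
  refine w.map_le_sub (w.map_le_add
    (le_map_of_le (map_pos_iff_one_le.1 h.map_apply_right_pos) ?_)
    (le_map_of_le (le_map_wittCarry_of_nonneg h.prime (neg_nonpos.2 hpr.le) h.map_left.ge le_rfl
      w.map_one.ge) ?_))
    (le_map_of_le (le_map_mul (h.map_algebraMap_eq h.map_shift).ge h.le_map_apply_left) ?_)
  · nlinarith
  · nlinarith
  · nlinarith [h.mul_lt_prime]

theorem isScaffoldPair [FiniteDimensional K L] (h : IsWittGenerator v w p σ a μ e m r x₁ x₂) :
    IsScaffoldPair w p σ μ (p ^ 2 * m + r) (p * r) x₁ (x₂ - algebraMap K L μ * x₁) where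
  prime := h.prime
  map_prime_pos := h.map_prime_pos
  pos_right := add_pos (mul_pos (by nlinarith [h.two_le]) h.pos_shift) h.pos
  pos_left := mul_pos (by linarith [h.two_le]) h.pos
  map_left := h.map_left
  map_right := h.map_sub_shift_mul
  le_map_algebraMap :=
    le_map_of_le (h.map_algebraMap_eq h.map_shift).ge (by linarith [h.pos])
  pow_apply_left := h.pow_apply_left
  le_map_pow_apply_right := by
    rw [map_sub (σ ^ p), map_mul, AlgEquiv.commutes, h.pow_apply_left, sub_sub_sub_cancel_right]
    exact h.le_map_pow_apply_right
  map_apply_left_pos := by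
    refine lt_of_lt_of_le (WithTop.coe_lt_coe.2 ?_) h.le_map_apply_left
    nlinarith [h.mul_lt_prime, mul_pos (by nlinarith [h.two_le] : (0 : ℤ) < p * (p - 1)) h.pos]
  le_map_apply_right := h.le_map_apply_sub_shift_mul
  isIncongruentBasis := h.isIncongruentBasis

/-- A scalar bridges the gap to `-(p - 1) * (b₂ + p * b₁)`, since this is congruent to `b₂` modulo
`p ^ 2` for `b₂ = p ^ 2 * m + r` and `b₁ = r`. -/
lemma exists_map_eq_map_smul_top [FiniteDimensional K L]
    (h : IsWittGenerator v w p σ a μ e m r x₁ x₂) (hv : ∀ n : ℤ, ∃ c, v c = n) {n : ℤ}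
    (hn : (p : ℤ) ^ 2 ∣ n - (p ^ 2 * m + r)) :
    ∃ c : K, w (c • (Ring.choose (x₂ - algebraMap K L μ * x₁) (p - 1) *
      Ring.choose x₁ (p - 1))) = n := by
  obtain ⟨q, hq⟩ := hn
  obtain ⟨c, hc⟩ := hv (q + p * m + r)
  have hp := h.prime.one_le
  refine ⟨c, ?_⟩
  rw [h.isScaffoldPair.map_smul_choose_mul_choose (by omega) (by omega), h.map_algebraMap_eq hc,
    ← WithTop.coe_add]
  congr 1
  push_cast [hp]
  linear_combination -hq

theorem map_scaffoldOp₁_pow_mul_scaffoldOp₂_pow [FiniteDimensional K L] [CharZero K]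
    (h : IsWittGenerator v w p σ a μ e m r x₁ x₂) (hv : ∀ n : ℤ, ∃ c, v c = n) {i j : ℕ}
    (hi : i < p) (hj : j < p) {x : L} {n : ℤ} (hx : w x = n)
    (hn : (p : ℤ) ^ 2 ∣ n - (p ^ 2 * m + r)) :
    w ((scaffoldOp₁ p σ μ ^ i * scaffoldOp₂ p σ ^ j) x) =
      (n + (j * (p ^ 2 * m + r) + i * (p * r)) : ℤ) := by
  obtain ⟨c, hc⟩ := h.exists_map_eq_map_smul_top hv hn
  rw [h.isScaffoldPair.map_scaffoldOp₁_pow_mul_scaffoldOp₂_pow hi hj (hx.trans hc.symm), hx,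
    WithTop.coe_add n]

end IsWittGenerator

end WittGenerator

end GaloisScaffold

open GaloisScaffold

/-- Corollary 3.6: for `0 ≤ i,j ≤ p−1` and any `α ∈ K₂` with
`v₂(α) ≡ b₂ (mod p²)`, one has `v₂(Ψ₁^i Ψ₂^j α) = v₂(α) + j·b₂ + i·p·b₁`. -/
theorem statement10
    (p : ℕ) (hp : p.Prime)
    (K0 K2 : Type*) [Field K0] [Field K2] [CharZero K0] [CharZero K2]
    [Algebra K0 K2] [IsGalois K0 K2] [FiniteDimensional K0 K2]
    (hdeg : Module.finrank K0 K2 = p ^ 2)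
    (hcyc : IsCyclic (K2 ≃ₐ[K0] K2))
    (v0 : K0 → ℤ) (v2 : K2 → ℤ)
    (hv0 : IsDiscVal v0) (hv2 : IsDiscVal v2)
    (e0 : ℤ) (he0 : e0 = v0 (p : K0)) (he0pos : 1 ≤ e0)
    (hram : ∀ x : K0, x ≠ 0 → v2 (algebraMap K0 K2 x) = (p : ℤ) ^ 2 * v0 x)
    (a1 μ a2 : K0) (ha1 : a1 ≠ 0) (hμ0 : μ ≠ 0)
    (hwitt : ∀ y : K0, y ^ p - y ≠ a1)
    (hnd : ¬ ((p : ℤ) ∣ v0 a1))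
    (hneg : v0 a1 < 0)
    (hbd : -((p : ℤ) * e0) < ((p : ℤ) ^ 2 - 1) * v0 a1)
    (m : ℤ) (hm : m = -v0 μ) (hmpos : 0 < m)
    (hmu1 : (p : ℤ) ^ 2 * (p - 1) * m - (2 * p * (p - 1) + 1) * v0 a1 < (p : ℤ) ^ 2 * e0)
    (hmu2 : -(((p : ℤ) ^ 2 - 1) * v0 a1) < (p : ℤ) ^ 2 * m)
    (ha2 : a2 = μ ^ p * a1)
    (x1 x2 : K2)
    (hx1 : x1 ^ p - x1 = algebraMap K0 K2 a1)
    (hx2 : x2 ^ p - x2 = algebraMap K0 K2 a2 +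
      (x1 ^ p + (algebraMap K0 K2 a1) ^ p - (x1 + algebraMap K0 K2 a1) ^ p) / (p : K2))
    (hgen : Algebra.adjoin K0 {x1, x2} = ⊤)
    (b1 b2 : ℤ) (hb1 : b1 = -v0 a1) (hb2 : b2 = (p : ℤ) ^ 2 * m + b1)
    (σ1 : K2 ≃ₐ[K0] K2) (ε δ' : K2)
    (hσ1x1 : σ1 x1 = x1 + 1 + ε)
    (hε : ε ≠ 0) (hεv : v2 ε = (p : ℤ) ^ 2 * e0 - p * (p - 1) * b1)
    (hσ1x2 : σ1 x2 = x2 + (x1 ^ p + 1 - (x1 + 1) ^ p) / (p : K2) + δ')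
    (hδ' : δ' = 0 ∨ 0 < v2 δ')
    (Ψ1 Ψ2 : Module.End K0 K2)
    (hΨ2 : Ψ2 = ((σ1 ^ p).toLinearMap : Module.End K0 K2) - 1)
    (hΨ1 : Ψ1 = (σ1.toLinearMap : Module.End K0 K2) *
      (∑ i ∈ Finset.range p,
        ((∏ k ∈ Finset.range i, (μ - (k : K0))) / (Nat.factorial i : K0)) • Ψ2 ^ i) - 1) :
    ∀ i j : ℕ, i ≤ p - 1 → j ≤ p - 1 →
      ∀ α : K2, α ≠ 0 → ((p : ℤ) ^ 2) ∣ (v2 α - b2) →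
        (Ψ1 ^ i * Ψ2 ^ j) α ≠ 0 ∧
        v2 ((Ψ1 ^ i * Ψ2 ^ j) α) = v2 α + (j : ℤ) * b2 + (i : ℤ) * p * b1 := by
  subst hb1 hb2 hm ha2
  have h : IsWittGenerator hv0.addValuation hv2.addValuation p σ1 a1 μ e0 (-v0 μ) (-v0 a1) x1 x2 :=
    { prime := hp
      finrank_eq := hdeg
      map_algebraMap :=
        hv0.addValuation_algebraMap hv2 (pow_ne_zero 2 hp.ne_zero) (by exact_mod_cast hram)
      map_prime := hv0.addValuation_eq_coe_iff.2 ⟨by exact_mod_cast hp.ne_zero, he0.symm⟩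
      map_base := hv0.addValuation_eq_coe_iff.2 ⟨ha1, by ring⟩
      map_shift := hv0.addValuation_eq_coe_iff.2 ⟨hμ0, by ring⟩
      pos := neg_pos.2 hneg
      not_dvd := by rwa [dvd_neg]
      mul_lt_shift := by linarith
      shift_lt_prime := by linarith
      artinSchreier_left := hx1
      artinSchreier_right := hx2
      le_map_apply_left := by
        simpa [hσ1x1, add_assoc] using (hv2.addValuation_eq_coe_iff.2 ⟨hε, hεv⟩).ge
      map_apply_right_pos := by
        simpa [hσ1x2, wittCarry, add_assoc] using hv2.addValuation_pos_iff.2 hδ' }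
  obtain rfl : Ψ2 = scaffoldOp₂ p σ1 := hΨ2
  obtain rfl : Ψ1 = scaffoldOp₁ p σ1 μ := by
    simp only [hΨ1, scaffoldOp₁, truncatedPow, choose_eq_prod_div]
  intro i j hi hj α hα hdvd
  obtain ⟨π, hπ0, hπ⟩ := hv0.exists_uniformizer
  have hval := h.map_scaffoldOp₁_pow_mul_scaffoldOp₂_pow
    (exists_map_eq_of_map_eq_one (hv0.addValuation_eq_coe_iff.2 ⟨hπ0, hπ⟩))
    (Nat.lt_of_le_pred hp.pos hi) (Nat.lt_of_le_pred hp.pos hj) (hv2.addValuation_apply hα) hdvd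
  exact (hv2.addValuation_eq_coe_iff.1 hval).imp_right fun hv ↦ hv.trans (by ring)
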